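/- Let B be the BlindOracle strategy. Then OBJ_B ≤ 3·OPT + 3η/k, where η = Σ_{t=1}^T |ν(t) − ω(t)| is the total prediction loss. In particular, the competitive ratio of BlindOracle is at most 3 + (3/k)·(η/OPT). -/

import Mathlib

namespace Caching

attribute [local instance low] Classical.propDecidable

/-- A run of a feasible eviction strategy on the request sequence `σ` with cache size `k`
and time horizon `T`.  `C t` is the cache after processing request `t` (with `C 0 = ∅`),
and `p t` is the page evicted at time `t` (meaningful at full-cache misses). -/
structure CacheRun (S : Type) [DecidableEq S] (k T : ℕ) (σ : ℕ → S) where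
  C : ℕ → Finset S
  p : ℕ → S
  init : C 0 = ∅
  card_le : ∀ t, (C t).card ≤ k
  hit : ∀ t, 1 ≤ t → t ≤ T → (σ t ∈ C (t - 1) ∨ (C (t - 1)).card < k) →
      C t = insert (σ t) (C (t - 1))
  evict_mem : ∀ t, 1 ≤ t → t ≤ T → σ t ∉ C (t - 1) → (C (t - 1)).card = k →
      p t ∈ C (t - 1)
  evict : ∀ t, 1 ≤ t → t ≤ T → σ t ∉ C (t - 1) → (C (t - 1)).card = k →
      C t = insert (σ t) ((C (t - 1)).erase (p t))

variable {S : Type} [DecidableEq S]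

/- `nextReq σ T t` is `ν(t)`: the first time `s > t` (with `s ≤ T`) at which the page
`σ t` is requested again, and `T + 1` if there is no such time. -/
open Classical in
noncomputable def nextReq (σ : ℕ → S) (T t : ℕ) : ℕ :=
  if h : ∃ s, t < s ∧ s ≤ T ∧ σ s = σ t then Nat.find h else T + 1

/-- The total prediction loss `η = Σ_{t=1}^T |ν(t) - ω(t)|`. -/
noncomputable def totalLoss (σ : ℕ → S) (T : ℕ) (ω : ℕ → ℕ) : ℕ :=
  ∑ t ∈ Finset.Icc 1 T, Nat.dist (nextReq σ T t) (ω t)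

/-- `I_Q(t)`: indices of the last requests (up to time `t`) of the currently cached pages. -/
noncomputable def lastIdx {k T : ℕ} {σ : ℕ → S} (R : CacheRun S k T σ) (t : ℕ) : Finset ℕ :=
  (Finset.Icc 1 t).filter fun i => σ i ∈ R.C t ∧ ∀ j ∈ Finset.Icc (i + 1) t, σ j ≠ σ i

/-- Time `t` is a full-cache miss (an eviction step). -/
def EvictStep {k T : ℕ} {σ : ℕ → S} (R : CacheRun S k T σ) (t : ℕ) : Prop :=
  1 ≤ t ∧ t ≤ T ∧ σ t ∉ R.C (t - 1) ∧ (R.C (t - 1)).card = k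

/-- At time `t` the run evicts the page whose last-request index is `i`. -/
def EvictsIdx {k T : ℕ} {σ : ℕ → S} (R : CacheRun S k T σ) (t i : ℕ) : Prop :=
  EvictStep R t ∧ i ∈ lastIdx R (t - 1) ∧ R.p t = σ i

/-- `OBJ_Q`: the number of cache misses of the run. -/
noncomputable def misses {k T : ℕ} {σ : ℕ → S} (R : CacheRun S k T σ) : ℕ :=
  ((Finset.Icc 1 T).filter fun t => σ t ∉ R.C (t - 1)).card

/-- Belady's algorithm: on a full-cache miss always evict the cached page with the
largest next-request time. -/
def IsBelady {k T : ℕ} {σ : ℕ → S} (A : CacheRun S k T σ) : Prop :=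
  ∀ t, EvictStep A t → ∀ i ∈ lastIdx A (t - 1), A.p t = σ i →
    ∀ j ∈ lastIdx A (t - 1), nextReq σ T j ≤ nextReq σ T i

/-- BlindOracle: on a full-cache miss always evict the cached page with the largest
predicted next-request time. -/
def IsBlindOracle {k T : ℕ} {σ : ℕ → S} (B : CacheRun S k T σ) (ω : ℕ → ℕ) : Prop :=
  ∀ t, EvictStep B t → ∀ i ∈ lastIdx B (t - 1), B.p t = σ i →
    ∀ j ∈ lastIdx B (t - 1), ω j ≤ ω i

/-- An eviction graph of a run: a directed graph on `{1,…,T}` whose every edge `(i, j)`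
corresponds to a distinct time (`time e`) at which the run made a mistake by evicting
page `σ j` while `i` was a strictly better eviction candidate in the cache. -/
structure EvictionGraph {k T : ℕ} {σ : ℕ → S} (R : CacheRun S k T σ) where
  E : Finset (ℕ × ℕ)
  time : ℕ × ℕ → ℕ
  time_inj : ∀ e ∈ E, ∀ e' ∈ E, time e = time e' → e = e'
  mistake : ∀ e ∈ E, EvictsIdx R (time e) e.2 ∧ e.1 ∈ lastIdx R (time e - 1) ∧
      nextReq σ T e.2 < nextReq σ T e.1

/-- The eviction at time `t` triggers the eviction at time `t'`: the page evicted
at `t` is next requested at `t' = ν(i)`, which is again an eviction step. -/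
def Triggers {k T : ℕ} {σ : ℕ → S} (R : CacheRun S k T σ) (t t' : ℕ) : Prop :=
  ∃ i, EvictsIdx R t i ∧ t' = nextReq σ T i ∧ ∃ j, EvictsIdx R t' j

/-- The eviction of the page with last-request index `i` triggers the eviction of the
page with last-request index `j` (at time `ν(i)`). -/
def TriggersIdx {k T : ℕ} {σ : ℕ → S} (R : CacheRun S k T σ) (i j : ℕ) : Prop :=
  (∃ t, EvictsIdx R t i) ∧ EvictsIdx R (nextReq σ T i) j

/-- The page requested at time `t` was never requested before. -/
def NewPage (σ : ℕ → S) (t : ℕ) : Prop := ∀ s, 1 ≤ s → s < t → σ s ≠ σ t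

/-- At time `t` the evicted page has the largest prediction among cached pages. -/
def BlindChoiceAt {k T : ℕ} {σ : ℕ → S} (R : CacheRun S k T σ) (ω : ℕ → ℕ) (t : ℕ) : Prop :=
  ∀ i ∈ lastIdx R (t - 1), R.p t = σ i → ∀ j ∈ lastIdx R (t - 1), ω j ≤ ω i

/-- Corrector's choice at time `t`: if some cached page has a provably wrong prediction
(`ω i < t`), evict such a page with minimal prediction; otherwise act as BlindOracle. -/
def CorrectorChoiceAt {k T : ℕ} {σ : ℕ → S} (R : CacheRun S k T σ) (ω : ℕ → ℕ) (t : ℕ) :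
    Prop :=
  ((∃ i ∈ lastIdx R (t - 1), ω i < t) →
    ∀ i ∈ lastIdx R (t - 1), R.p t = σ i →
      ω i < t ∧ ∀ j ∈ lastIdx R (t - 1), ω j < t → ω i ≤ ω j) ∧
  ((¬ ∃ i ∈ lastIdx R (t - 1), ω i < t) → BlindChoiceAt R ω t)

/-- The page requested at time `t` was last evicted (before `t`) at a step labeled with
strategy `s₀` (0 = BlindOracle, 1 = RandomAlg, 2 = Corrector). -/
def LastEvictedWith {k T : ℕ} {σ : ℕ → S} (R : CacheRun S k T σ) (strat : ℕ → Fin 3)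
    (t : ℕ) (s₀ : Fin 3) : Prop :=
  ∃ t₀, t₀ < t ∧ EvictStep R t₀ ∧ R.p t₀ = σ t ∧ strat t₀ = s₀ ∧
    ∀ t₁, t₀ < t₁ → t₁ < t → ¬(EvictStep R t₁ ∧ R.p t₁ = σ t)

/-- A run of the AlternatingOracle strategy (for a fixed realization of its random
choices), together with the labeling `strat` of which of the three strategies was used
at each eviction step: on a miss for a never-requested page use BlindOracle; if the
requested page was last evicted by BlindOracle use RandomAlg (an arbitrary cached page);
if by RandomAlg use Corrector; if by Corrector use BlindOracle. -/
def IsAlternatingOracle {k T : ℕ} {σ : ℕ → S} (R : CacheRun S k T σ) (ω : ℕ → ℕ)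
    (strat : ℕ → Fin 3) : Prop :=
  ∀ t, EvictStep R t →
    (NewPage σ t → strat t = 0 ∧ BlindChoiceAt R ω t) ∧
    (LastEvictedWith R strat t 0 → strat t = 1) ∧
    (LastEvictedWith R strat t 1 → strat t = 2 ∧ CorrectorChoiceAt R ω t) ∧
    (LastEvictedWith R strat t 2 → strat t = 0 ∧ BlindChoiceAt R ω t)

/-- AlternatingOracle driven by a seed `u` of uniform random values: at each eviction
step performed by RandomAlg at time `t`, the evicted page is the one whose last-request
index has rank `u t` among the `k` cached indices, so that for a uniformly random seed
the evicted page is uniform over the cache. -/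
def IsAlternatingOracleSeeded {k T : ℕ} {σ : ℕ → S} (R : CacheRun S k T σ) (ω : ℕ → ℕ)
    (strat : ℕ → Fin 3) (u : Fin (T + 1) → Fin k) : Prop :=
  IsAlternatingOracle R ω strat ∧
  ∀ t (h : EvictStep R t), strat t = 1 →
    ∀ i ∈ lastIdx R (t - 1), R.p t = σ i →
      ((lastIdx R (t - 1)).filter fun j => j < i).card =
        ((u ⟨t, Nat.lt_succ_of_le h.2.1⟩ : Fin k) : ℕ)

/-- The family of runs is adapted to the seeds: the behavior up to time `t` depends only
on the seed values with index at most `t` (the strategy is online). -/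
def Adapted {k T : ℕ} {σ : ℕ → S} (R : (Fin (T + 1) → Fin k) → CacheRun S k T σ)
    (strat : (Fin (T + 1) → Fin k) → ℕ → Fin 3) : Prop :=
  ∀ u u' t, (∀ s : Fin (T + 1), (s : ℕ) ≤ t → u s = u' s) →
    (R u).C t = (R u').C t ∧ (R u).p t = (R u').p t ∧ strat u t = strat u' t

/-- The probability of the outcome `x` for `T` i.i.d. Bernoulli(γ) random bits. -/
noncomputable def bernWeight (γ : ℝ) {T : ℕ} (x : Fin T → Bool) : ℝ :=
  ∏ i, if x i then γ else 1 - γ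

/-- `S(x, m)`: the number of ones among the first `m` coordinates of `x`. -/
noncomputable def scount {T : ℕ} (x : Fin T → Bool) (m : ℕ) : ℕ :=
  (Finset.univ.filter fun i : Fin T => (i : ℕ) < m ∧ x i).card

/-
Compare BlindOracle `B` with an arbitrary strategy `A`. A hole, that is a page cached by `A` but not
by `B`, either holds a credit, and two credits per miss of `A` suffice for those, or is anchored: it
is labelled by a request that is outdated by now. The labels are dominated, in the order of the
predictions, by the last requests of the pages in the cache of `B`, because `B` evicts the largest
prediction. So at every time the anchored holes inject into the predictions that are wrong at that
time: an outdated request predicted for later, or a page of `B` that is overdue. The prediction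
`ω i` is wrong at `η i` times, hence the anchored holes are absent from the cache of `B` for a total
time of at most `η`, while `B` has at most `2 · OPT + #J` misses, where `J` is the set of misses on
anchored holes.

It remains to bound `#J`. Let the page missed at `m` be evicted at `e` with prediction `w`. All `k`
pages cached at `e` were predicted at most `w`, but at most `m - e` of them are requested in
`(e, m]`; the others are requested after `m`, either within `2 (w - m)` steps or so late that their
prediction errs by more than half the distance of that request from `m`. Thus
`k ≤ (m - e) + 2 (w - m) + #{i | m < ν i, 2 ω i < m + ν i}`, and in the sum over `m` each of the two
latter terms charges a prediction at most twice its loss, on opposite sides of the truth. This gives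
`k #J ≤ η + 2 η`, except for the pages evicted in the last `k` steps, which are missed at most
`k ≤ OPT` times.
-/

open Finset

section ThresholdDom

variable {α β : Type*} [LinearOrder β] {X E Y : Finset α} {u v : α → β} {p : ℕ} {q s y : α}

/-- `X`, weighted by `u`, is dominated by `Y`, weighted by `v`, up to a deficit `p`: below every
threshold `X` has at most `p` more elements than `Y`. By Hall's theorem, this says that all but `p`
elements of `X` can be matched injectively to elements of `Y` of no larger weight; the counting form
makes it unnecessary to carry a matching along. -/
def ThresholdDom (X Y : Finset α) (u v : α → β) (p : ℕ) : Prop :=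
  ∀ τ, #{x ∈ X | u x ≤ τ} ≤ #{y ∈ Y | v y ≤ τ} + p

namespace ThresholdDom

lemma mono_left (h : ThresholdDom X Y u v p) (hE : E ⊆ X) : ThresholdDom E Y u v p :=
  fun τ => (card_le_card (filter_subset_filter _ hE)).trans (h τ)

variable [DecidableEq α]

lemma erase_right (h : ThresholdDom X Y u v p) (y : α) :
    ThresholdDom X (Y.erase y) u v (p + 1) := by
  intro τ
  have := h τ
  have := pred_card_le_card_erase (s := {y ∈ Y | v y ≤ τ}) (a := y)
  rw [filter_erase]
  omega

lemma erase_erase (h : ThresholdDom X Y u v p) (hs : s ∈ X ↔ s ∈ Y) (huv : s ∈ X → u s = v s) :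
    ThresholdDom (X.erase s) (Y.erase s) u v p := by
  intro τ
  have := h τ
  by_cases hsX : s ∈ X ∧ u s ≤ τ
  · have hX := card_erase_add_one (s := {x ∈ X | u x ≤ τ}) (mem_filter.2 hsX)
    have hY := card_erase_add_one (s := {y ∈ Y | v y ≤ τ}) (a := s)
      (mem_filter.2 ⟨hs.1 hsX.1, huv hsX.1 ▸ hsX.2⟩)
    rw [filter_erase, filter_erase]
    omega
  · have hsY : s ∉ ({y ∈ Y | v y ≤ τ} : Finset α) := fun hsY =>
      hsX ⟨hs.2 (mem_filter.1 hsY).1, (huv (hs.2 (mem_filter.1 hsY).1)).trans_le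
        (mem_filter.1 hsY).2⟩
    rwa [filter_erase, filter_erase, erase_eq_of_notMem (by rwa [mem_filter]),
      erase_eq_of_notMem hsY]

lemma insert_insert (h : ThresholdDom X Y u v p) (hX : s ∉ X) (hY : s ∉ Y) (c : β) :
    ThresholdDom (insert s X) (insert s Y) (Function.update u s c) (Function.update v s c) p := by
  intro τ
  have hXu : ({x ∈ X | Function.update u s c x ≤ τ} : Finset α) = {x ∈ X | u x ≤ τ} :=
    filter_congr fun x hx => by rw [Function.update_of_ne (ne_of_mem_of_not_mem hx hX)]
  have hYv : ({y ∈ Y | Function.update v s c y ≤ τ} : Finset α) = {y ∈ Y | v y ≤ τ} :=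
    filter_congr fun y hy => by rw [Function.update_of_ne (ne_of_mem_of_not_mem hy hY)]
  have := h τ
  simp only [filter_insert, Function.update_self, hXu, hYv]
  split_ifs
  · rw [card_insert_of_notMem (by simp [hX]), card_insert_of_notMem (by simp [hY])]
    omega
  · exact this

lemma erase_max (h : ThresholdDom X Y u v p) (hq : ∀ y ∈ Y, v y ≤ v q)
    (hcard : #X ≤ #(Y.erase q) + p) : ThresholdDom X (Y.erase q) u v p := by
  intro τ
  rcases lt_or_ge τ (v q) with hτ | hτ
  · have hqτ : q ∉ ({y ∈ Y | v y ≤ τ} : Finset α) := fun hmem =>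
      hτ.not_ge (mem_filter.1 hmem).2
    rw [filter_erase, erase_eq_of_notMem hqτ]
    exact h τ
  · rw [filter_true_of_mem fun y hy => (hq y (mem_of_mem_erase hy)).trans hτ]
    exact (card_filter_le _ _).trans hcard

lemma erase_update (h : ThresholdDom X Y u v p) (hs : s ∈ X) (q : α) :
    ThresholdDom (X.erase s) Y (Function.update u q (u s)) v p := by
  intro τ
  refine le_trans (card_le_card_of_injOn (Equiv.swap q s) ?_ (Equiv.injective _).injOn) (h τ)
  intro x hx
  obtain ⟨hxX, hxτ⟩ := mem_filter.1 (mem_coe.1 hx)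
  obtain ⟨hxs, hxX⟩ := mem_erase.1 hxX
  rcases eq_or_ne x q with rfl | hxq
  · rw [Function.update_self] at hxτ
    simpa using ⟨hs, hxτ⟩
  · rw [Function.update_of_ne hxq] at hxτ
    simpa [Equiv.swap_apply_of_ne_of_ne hxq hxs] using ⟨hxX, hxτ⟩

lemma exists_sdiff_erase (h : ThresholdDom X Y u v 0) (huv : ∀ x ∈ X, x ∈ Y → u x = v x)
    (hy : y ∉ X) : ∃ Z ⊆ X \ Y, #Z ≤ 1 ∧ ThresholdDom (X \ Z) (Y.erase y) u v 0 := by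
  have below : ∀ τ, (∀ z ∈ X \ Y, τ < u z) →
      #{x ∈ X | u x ≤ τ} ≤ #{x ∈ Y.erase y | v x ≤ τ} := by
    refine fun τ hτ => card_le_card fun x hx => ?_
    obtain ⟨hxX, hxτ⟩ := mem_filter.1 hx
    have hxY : x ∈ Y := by_contra fun hxY => (hτ x (mem_sdiff.2 ⟨hxX, hxY⟩)).not_ge hxτ
    exact mem_filter.2 ⟨mem_erase.2 ⟨ne_of_mem_of_not_mem hxX hy, hxY⟩, huv x hxX hxY ▸ hxτ⟩
  rcases (X \ Y).eq_empty_or_nonempty with hXY | hXY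
  · refine ⟨∅, empty_subset _, by simp, fun τ => ?_⟩
    simpa using below τ (by simp [hXY])
  -- Removing the lightest element of `X \ Y` repairs every threshold at once.
  obtain ⟨z, hz, hmin⟩ := exists_min_image (X \ Y) u hXY
  refine ⟨{z}, singleton_subset_iff.2 hz, by simp, fun τ => ?_⟩
  rw [sdiff_singleton_eq_erase, add_zero]
  rcases lt_or_ge τ (u z) with hτ | hτ
  · exact (card_le_card (filter_subset_filter _ (erase_subset _ _))).trans
      (below τ fun z' hz' => hτ.trans_le (hmin z' hz'))
  · have hX := card_erase_add_one (s := {x ∈ X | u x ≤ τ}) (a := z)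
      (mem_filter.2 ⟨(mem_sdiff.1 hz).1, hτ⟩)
    have := h.erase_right y τ
    rw [filter_erase]
    omega

lemma exists_pred_deficit (h : ThresholdDom X Y u v p) (hE : E ⊆ X) (hEY : ThresholdDom E Y u v 0)
    (hsX : s ∈ X) (hsE : s ∉ E) (hins : ¬ ThresholdDom (insert s E) Y u v 0) :
    ∃ p', p = p' + 1 ∧ ThresholdDom (X.erase s) Y u v p' := by
  have split (τ : β) : #{x ∈ X | u x ≤ τ} = #{x ∈ E | u x ≤ τ} + #{x ∈ X \ E | u x ≤ τ} := by
    rw [← card_union_of_disjoint (disjoint_filter_filter disjoint_sdiff), ← filter_union,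
      union_sdiff_of_subset hE]
  obtain ⟨τ₀, hsτ₀, tight⟩ : ∃ τ₀, u s ≤ τ₀ ∧ #{y ∈ Y | v y ≤ τ₀} = #{x ∈ E | u x ≤ τ₀} := by
    simp only [ThresholdDom, not_forall, not_le, add_zero, filter_insert] at hins
    obtain ⟨τ₀, hτ₀⟩ := hins
    have := hEY τ₀
    split_ifs at hτ₀ with hs
    · have := card_insert_le s {x ∈ E | u x ≤ τ₀}
      exact ⟨τ₀, hs, by omega⟩
    · omega
  have hs : s ∈ ({x ∈ X \ E | u x ≤ τ₀} : Finset α) := by simp [hsX, hsE, hsτ₀]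
  have hslack : #{x ∈ X \ E | u x ≤ τ₀} ≤ p := by
    have := h τ₀
    have := split τ₀
    omega
  obtain ⟨p', rfl⟩ := Nat.exists_eq_add_of_le' ((card_pos.2 ⟨s, hs⟩).trans_le hslack)
  refine ⟨p', rfl, fun τ => ?_⟩
  rw [filter_erase]
  rcases lt_or_ge τ (u s) with hτ | hτ
  · have hlt : #{x ∈ X \ E | u x ≤ τ} < #{x ∈ X \ E | u x ≤ τ₀} :=
      card_lt_card ⟨fun x hx => mem_filter.2 ⟨(mem_filter.1 hx).1,
        (mem_filter.1 hx).2.trans (hτ.le.trans hsτ₀)⟩,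
        fun hsub => hτ.not_ge (mem_filter.1 (hsub hs)).2⟩
    have := card_erase_le (s := {x ∈ X | u x ≤ τ}) (a := s)
    have := hEY τ
    have := split τ
    omega
  · have := card_erase_add_one (s := {x ∈ X | u x ≤ τ}) (a := s) (mem_filter.2 ⟨hsX, hτ⟩)
    have := h τ
    omega

end ThresholdDom

end ThresholdDom

section CreditScheme

variable {I β : Type*} [LinearOrder β] {ω : I → β} {last ℓ : S → I} {P Q : Finset I}
  {A B F : Finset S} {p : ℕ} {q s x y : S} {n : I}

/-- The bookkeeping that pays for the misses of a strategy with cache `B` out of those of a strategy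
with cache `A`, where `last` gives the index of the last request of a page. Each cached page `a ∈ A`
carries its own label `ℓ a`: its last request, or one of the outdated requests in `P`, inherited
from a page that has left `A`. The *holes* `A \ B` are either *funded*, i.e. in `F`, and hold one
credit each, or *anchored*, i.e. in `(A \ B) \ F`, and labelled by an outdated request. There are
`p` further credits, and the labels of `A` are dominated by the last requests of `B` in the order
of the predictions `ω`: without deficit for the unfunded pages, with deficit `p` for all of `A`. -/
structure CreditScheme (ω : I → β) (last : S → I) (P : Finset I) (A B F : Finset S) (ℓ : S → I)
    (p : ℕ) : Prop where
  funded_subset : F ⊆ A \ B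
  injOn : Set.InjOn ℓ A
  label_of_mem : ∀ a ∈ A, a ∈ B → ℓ a = last a
  label_or : ∀ a ∈ A, ℓ a = last a ∨ ℓ a ∈ P
  label_anchored : ∀ a ∈ (A \ B) \ F, ℓ a ∈ P
  dom : ThresholdDom A B (ω ∘ ℓ) (ω ∘ last) p
  dom_unfunded : ThresholdDom (A \ F) B (ω ∘ ℓ) (ω ∘ last) 0

namespace CreditScheme

lemma mono (h : CreditScheme ω last P A B F ℓ p) (hPQ : P ⊆ Q) :
    CreditScheme ω last Q A B F ℓ p where
  __ := h
  label_or a ha := (h.label_or a ha).imp_right fun hP => hPQ hP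
  label_anchored a ha := hPQ (h.label_anchored a ha)

lemma erase_erase (h : CreditScheme ω last P A B F ℓ p) (hs : s ∈ A ↔ s ∈ B) :
    CreditScheme ω last P (A.erase s) (B.erase s) F ℓ p := by
  have hF := h.funded_subset
  have hsF : s ∉ F := fun hsF => by grind
  have hlabel : s ∈ A → (ω ∘ ℓ) s = (ω ∘ last) s := fun hsA =>
    congrArg ω (h.label_of_mem s hsA (hs.1 hsA))
  refine ⟨by grind, h.injOn.mono (by simp), fun a ha hb => h.label_of_mem a (mem_of_mem_erase ha)
    (mem_of_mem_erase hb), fun a ha => h.label_or a (mem_of_mem_erase ha),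
    fun a ha => h.label_anchored a (by grind), h.dom.erase_erase hs hlabel, ?_⟩
  rw [erase_sdiff_comm]
  exact h.dom_unfunded.erase_erase (by grind) fun hsA => hlabel (mem_sdiff.1 hsA).1

lemma erase_left (h : CreditScheme ω last P A B F ℓ p) (x : S) :
    CreditScheme ω last P (A.erase x) B (F.erase x) ℓ p where
  funded_subset := by have := h.funded_subset; grind
  injOn := h.injOn.mono (by simp)
  label_of_mem a ha := h.label_of_mem a (mem_of_mem_erase ha)
  label_or a ha := h.label_or a (mem_of_mem_erase ha)
  label_anchored a ha := h.label_anchored a (by grind)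
  dom := h.dom.mono_left (erase_subset _ _)
  dom_unfunded := h.dom_unfunded.mono_left (by grind)

lemma exists_erase_right (h : CreditScheme ω last P A B F ℓ p) (hy : y ∉ A) :
    ∃ F', F ⊆ F' ∧ #F' ≤ #F + 1 ∧ CreditScheme ω last P A (B.erase y) F' ℓ (p + 1) := by
  have hlabel : ∀ a ∈ A \ F, a ∈ B → (ω ∘ ℓ) a = (ω ∘ last) a := fun a ha hb =>
    congrArg ω (h.label_of_mem a (mem_sdiff.1 ha).1 hb)
  obtain ⟨Z, hZ, hZcard, hdom⟩ := h.dom_unfunded.exists_sdiff_erase hlabel (y := y) (by grind)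
  have hF := h.funded_subset
  refine ⟨F ∪ Z, subset_union_left, (card_union_le _ _).trans (by omega), by grind, h.injOn,
    fun a ha hb => h.label_of_mem a ha (mem_of_mem_erase hb), h.label_or,
    fun a ha => h.label_anchored a (by grind), h.dom.erase_right y, ?_⟩
  rwa [← sup_eq_union, ← sdiff_sdiff_left]

lemma erase_max (h : CreditScheme ω last P A B F ℓ p) (hq : ∀ b ∈ B, ω (last b) ≤ ω (last q))
    (hcard : #A ≤ #(B.erase q)) :
    CreditScheme ω last P A (B.erase q) (F ∪ A ∩ {q}) ℓ p where
  funded_subset := by have := h.funded_subset; grind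
  injOn := h.injOn
  label_of_mem a ha hb := h.label_of_mem a ha (mem_of_mem_erase hb)
  label_or := h.label_or
  label_anchored a ha := h.label_anchored a (by grind)
  dom := h.dom.erase_max hq (hcard.trans (Nat.le_add_right _ _))
  dom_unfunded := (h.dom_unfunded.mono_left (sdiff_subset_sdiff subset_rfl subset_union_left)
    ).erase_max hq ((card_le_card sdiff_subset).trans hcard)

lemma transfer (h : CreditScheme ω last P A B F ℓ p) (hsA : s ∈ A) (hsB : s ∉ B) (hsF : s ∉ F)
    (hq : ∀ b ∈ B, ω (last b) ≤ ω (last q))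
    (hcard : #(A.erase s) ≤ #(B.erase q)) :
    CreditScheme ω last P (A.erase s) (B.erase q) F (Function.update ℓ q (ℓ s)) p := by
  have hF := h.funded_subset
  have hsP : ℓ s ∈ P := h.label_anchored s (by grind)
  have hmax {E : Finset S} {r : ℕ} (hE : E ⊆ A) (hsE : s ∈ E)
      (hdom : ThresholdDom E B (ω ∘ ℓ) (ω ∘ last) r) :
      ThresholdDom (E.erase s) (B.erase q) (ω ∘ Function.update ℓ q (ℓ s)) (ω ∘ last) r := by
    rw [Function.comp_update]
    exact (hdom.erase_update hsE q).erase_max hq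
      (((card_le_card (erase_subset_erase s hE)).trans hcard).trans (Nat.le_add_right _ _))
  have hinj : ∀ a ∈ A, ∀ b ∈ A, ℓ a = ℓ b → a = b := h.injOn
  refine ⟨by grind, ?_, ?_, ?_, ?_, hmax subset_rfl hsA h.dom, ?_⟩
  · intro a ha b hb
    grind
  · intro a ha hb
    have := h.label_of_mem a
    grind
  · intro a ha
    have := h.label_or a
    grind
  · intro a ha
    have := h.label_anchored a
    grind
  · rw [erase_sdiff_comm]
    exact hmax sdiff_subset (mem_sdiff.2 ⟨hsA, hsF⟩) h.dom_unfunded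

lemma release_or_pay (h : CreditScheme ω last P A B F ℓ p) (hsF : s ∈ F) (hsP : ℓ s ∈ P) :
    CreditScheme ω last P A B (F.erase s) ℓ p ∨
      ∃ p', p = p' + 1 ∧ CreditScheme ω last P (A.erase s) B (F.erase s) ℓ p' := by
  have hF := h.funded_subset
  have hsA : s ∈ A := (mem_sdiff.1 (hF hsF)).1
  by_cases hdom : ThresholdDom (insert s (A \ F)) B (ω ∘ ℓ) (ω ∘ last) 0
  · rw [← sdiff_erase hsA] at hdom
    refine Or.inl { h with funded_subset := by grind, label_anchored := ?_, dom_unfunded := hdom }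
    intro a ha
    have := h.label_anchored a
    grind
  · obtain ⟨p', rfl, hp'⟩ := h.dom.exists_pred_deficit sdiff_subset h.dom_unfunded hsA
      (fun hs => (mem_sdiff.1 hs).2 hsF) hdom
    exact Or.inr ⟨p', rfl, { h.erase_left s with dom := hp' }⟩

lemma insert_insert (h : CreditScheme ω last P A B F ℓ p) (hsA : s ∉ A) (hsB : s ∉ B)
    (hn : ∀ a ∈ A, ℓ a ≠ n) :
    CreditScheme ω (Function.update last s n) P (insert s A) (insert s B) F
      (Function.update ℓ s n) p := by
  have hF := h.funded_subset
  have hsF : s ∉ F := fun hsF => hsA (mem_sdiff.1 (hF hsF)).1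
  have hinj : ∀ a ∈ A, ∀ b ∈ A, ℓ a = ℓ b → a = b := h.injOn
  refine ⟨by grind, ?_, ?_, ?_, ?_, ?_, ?_⟩
  · intro a ha b hb
    grind
  · intro a ha hb
    have := h.label_of_mem a
    grind
  · intro a ha
    have := h.label_or a
    grind
  · intro a ha
    have := h.label_anchored a
    grind
  · rw [Function.comp_update, Function.comp_update]
    exact h.dom.insert_insert hsA hsB _
  · rw [Function.comp_update, Function.comp_update, insert_sdiff_of_notMem _ hsF]
    exact h.dom_unfunded.insert_insert (fun hs => hsA (mem_sdiff.1 hs).1) hsB _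

lemma exists_evict_hit (h : CreditScheme ω last P A B F ℓ p) (hsA : s ∉ A) (x : S) :
    ∃ F' p', CreditScheme ω last P (A.erase x) (B.erase s) F' ℓ p' ∧
      (A.erase x \ B.erase s) \ F' ⊆ (A \ B) \ F ∧ #F' + p' ≤ #F + p + 2 := by
  obtain ⟨F', hFF', hcard, h'⟩ :=
    (h.erase_left x).exists_erase_right (y := s) fun hs => hsA (mem_of_mem_erase hs)
  have := card_erase_le (s := F) (a := x)
  exact ⟨F', p + 1, h', by grind, by omega⟩

lemma exists_evict_evict (h : CreditScheme ω last P A B F ℓ p)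
    (hq : ∀ b ∈ B, ω (last b) ≤ ω (last q)) (hcard : #(A.erase x) ≤ #(B.erase q)) :
    ∃ F', CreditScheme ω last P (A.erase x) (B.erase q) F' ℓ p ∧
      (A.erase x \ B.erase q) \ F' ⊆ (A \ B) \ F ∧ #F' ≤ #F + 1 := by
  refine ⟨_, (h.erase_left x).erase_max hq hcard, by grind, (card_union_le _ _).trans ?_⟩
  exact add_le_add card_erase_le ((card_le_card inter_subset_right).trans (card_singleton q).le)

lemma exists_hit_evict (h : CreditScheme ω last P A B F ℓ p) (hsA : s ∈ A) (hsB : s ∉ B)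
    (hsP : ℓ s ∈ P) (hq : ∀ b ∈ B, ω (last b) ≤ ω (last q))
    (hcard : #(A.erase s) ≤ #(B.erase q)) :
    ∃ F' ℓ' p', CreditScheme ω last P (A.erase s) (B.erase q) F' ℓ' p' ∧
      (A.erase s \ B.erase q) \ F' ⊆ insert q (((A \ B) \ F).erase s) ∧
      #F' + p' + 1 ≤ #F + p + if s ∈ (A \ B) \ F then 1 else 0 := by
  by_cases hsF : s ∈ F
  · have hsD : s ∉ (A \ B) \ F := fun hs => (mem_sdiff.1 hs).2 hsF
    have hFs := card_erase_add_one hsF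
    rw [if_neg hsD]
    rcases h.release_or_pay hsF hsP with h' | ⟨p', rfl, h'⟩
    · exact ⟨_, _, _, h'.transfer hsA hsB (notMem_erase s F) hq hcard, by grind, by omega⟩
    · have := card_union_le (F.erase s) (A.erase s ∩ {q})
      have := (card_le_card (inter_subset_right (s₁ := A.erase s))).trans (card_singleton q).le
      exact ⟨_, _, _, h'.erase_max hq hcard, by grind, by omega⟩
  · exact ⟨_, _, _, h.transfer hsA hsB hsF hq hcard, by grind, by grind⟩

lemma card_anchored_le (h : CreditScheme ω last P A B F ℓ p) (τ : β) :
    #((A \ B) \ F) ≤ #{i ∈ P | τ < ω i} + #{b ∈ B | ω (last b) ≤ τ} := by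
  have hlow : #{a ∈ (A \ B) \ F | ω (ℓ a) ≤ τ} ≤ #{b ∈ B | ω (last b) ≤ τ} :=
    (card_le_card (filter_subset_filter _ (sdiff_subset_sdiff sdiff_subset subset_rfl))).trans
      (h.dom_unfunded τ)
  have hhigh : #{a ∈ (A \ B) \ F | ¬ ω (ℓ a) ≤ τ} ≤ #{i ∈ P | τ < ω i} := by
    refine card_le_card_of_injOn ℓ (fun a ha => ?_) (h.injOn.mono fun a ha => ?_)
    · obtain ⟨haD, haτ⟩ := mem_filter.1 (mem_coe.1 ha)
      exact mem_coe.2 (mem_filter.2 ⟨h.label_anchored a haD, not_le.1 haτ⟩)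
    · exact (mem_sdiff.1 (mem_sdiff.1 (mem_filter.1 (mem_coe.1 ha)).1).1).1
  have := card_filter_add_card_filter_not (s := (A \ B) \ F) (fun a => ω (ℓ a) ≤ τ)
  omega

end CreditScheme

end CreditScheme

section Requests

variable {σ : ℕ → S} {ω : ℕ → ℕ} {T t i j m : ℕ} {s : S}

lemma lt_nextReq_and_apply_nextReq (h : nextReq σ T i ≤ T) :
    i < nextReq σ T i ∧ σ (nextReq σ T i) = σ i := by
  unfold nextReq at h ⊢
  split_ifs at h ⊢ with hex
  · exact ⟨(Nat.find_spec hex).1, (Nat.find_spec hex).2.2⟩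
  · omega

lemma nextReq_le_of_apply_eq (him : i < m) (hmT : m ≤ T) (hm : σ m = σ i) :
    nextReq σ T i ≤ m := by
  have hex : ∃ s, i < s ∧ s ≤ T ∧ σ s = σ i := ⟨m, him, hmT, hm⟩
  rw [nextReq, dif_pos hex]
  exact Nat.find_min' hex ⟨him, hmT, hm⟩

/-- The index of the last request of the page `s` up to time `t` (`0` if there is none). -/
noncomputable def lastReq (σ : ℕ → S) (t : ℕ) (s : S) : ℕ :=
  Nat.findGreatest (fun i => σ i = s) t

lemma lastReq_succ (σ : ℕ → S) (t : ℕ) :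
    lastReq σ (t + 1) = Function.update (lastReq σ t) (σ (t + 1)) (t + 1) := by
  funext s
  by_cases hs : s = σ (t + 1)
  · subst hs
    rw [Function.update_self]
    exact Nat.findGreatest_eq (P := fun i => σ i = σ (t + 1)) rfl
  · rw [Function.update_of_ne hs]
    exact Nat.findGreatest_of_not (P := fun i => σ i = s) (Ne.symm hs)

lemma lastReq_le (σ : ℕ → S) (t : ℕ) (s : S) : lastReq σ t s ≤ t := Nat.findGreatest_le t

lemma apply_ne_of_lastReq_lt (hj : lastReq σ t s < j) (hjt : j ≤ t) : σ j ≠ s :=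
  Nat.findGreatest_is_greatest (P := fun i => σ i = s) hj hjt

lemma lastReq_mem_Icc (hs : ∃ i ∈ Icc 1 t, σ i = s) : lastReq σ t s ∈ Icc 1 t := by
  obtain ⟨i, hi, his⟩ := hs
  rw [mem_Icc] at hi ⊢
  exact ⟨hi.1.trans (Nat.le_findGreatest (P := fun i => σ i = s) hi.2 his), lastReq_le σ t s⟩

lemma apply_lastReq (hs : ∃ i ∈ Icc 1 t, σ i = s) : σ (lastReq σ t s) = s := by
  obtain ⟨i, hi, his⟩ := hs
  exact Nat.findGreatest_spec (P := fun i => σ i = s) (mem_Icc.1 hi).2 his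

lemma lastReq_eq_of_forall_ne (hmt : m ≤ t) (hne : ∀ j ∈ Ioc m t, σ j ≠ s) :
    lastReq σ t s = lastReq σ m s := by
  induction t, hmt using Nat.le_induction with
  | base => rfl
  | succ t hmt ih =>
    rw [lastReq_succ, Function.update_of_ne (hne (t + 1) (by simp; omega)).symm]
    exact ih fun j hj => hne j (by rw [mem_Ioc] at hj ⊢; omega)

lemma lt_nextReq_lastReq (hs : ∃ i ∈ Icc 1 t, σ i = s) (ht : t ≤ T) :
    t < nextReq σ T (lastReq σ t s) := by
  by_contra! hle
  obtain ⟨hlt, happ⟩ := lt_nextReq_and_apply_nextReq (hle.trans ht)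
  exact apply_ne_of_lastReq_lt hlt hle (happ.trans (apply_lastReq hs))

lemma nextReq_lastReq (hs : ∃ i ∈ Icc 1 t, σ i = σ (t + 1)) (ht : t < T) :
    nextReq σ T (lastReq σ t (σ (t + 1))) = t + 1 :=
  le_antisymm
    (nextReq_le_of_apply_eq (Nat.lt_succ_of_le (lastReq_le _ _ _)) ht (apply_lastReq hs).symm)
    (lt_nextReq_lastReq hs ht.le)

/-- The requests that are outdated at time `t`: their page has been requested again by then. -/
noncomputable def expired (σ : ℕ → S) (T t : ℕ) : Finset ℕ := {i ∈ Icc 1 T | nextReq σ T i ≤ t}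

/-- The number of predictions that are wrong at time `t`: those of a next request that has already
happened but is predicted for later, and those of a next request that is overdue. Every
prediction `ω i` is wrong at `η(i)` times, so `wrongAt` distributes the total loss over time. -/
noncomputable def wrongAt (σ : ℕ → S) (T : ℕ) (ω : ℕ → ℕ) (t : ℕ) : ℕ :=
  #{i ∈ Icc 1 T | nextReq σ T i ≤ t ∧ t < ω i} + #{i ∈ Icc 1 T | t < nextReq σ T i ∧ ω i ≤ t}

lemma sum_wrongAt_le_totalLoss (σ : ℕ → S) (T : ℕ) (ω : ℕ → ℕ) :
    ∑ t ∈ Icc 1 T, wrongAt σ T ω t ≤ totalLoss σ T ω := by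
  have hcount (a b : ℕ) : #{t ∈ Icc 1 T | a ≤ t ∧ t < b} ≤ b - a := by
    rw [← Nat.card_Ico]
    exact card_le_card fun t ht => mem_Ico.2 (mem_filter.1 ht).2
  have hcomm (f g : ℕ → ℕ) : ∑ t ∈ Icc 1 T, #{i ∈ Icc 1 T | f i ≤ t ∧ t < g i} ≤
      ∑ i ∈ Icc 1 T, (g i - f i) :=
    (sum_card_bipartiteAbove_eq_sum_card_bipartiteBelow fun t i => f i ≤ t ∧ t < g i).trans_le
      (sum_le_sum fun i _ => hcount _ _)
  simp only [wrongAt, totalLoss, Nat.dist, sum_add_distrib]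
  rw [add_comm]
  refine add_le_add ?_ (hcomm _ _)
  simpa only [and_comm] using hcomm ω (nextReq σ T)

end Requests

section Runs

variable {k T t m : ℕ} {σ : ℕ → S} {ω : ℕ → ℕ} {A B R : CacheRun S k T σ} {s : S}

namespace CacheRun

lemma C_succ_of_not_evictStep (ht : t < T) (h : ¬ EvictStep R (t + 1)) :
    R.C (t + 1) = insert (σ (t + 1)) (R.C t) := by
  refine R.hit (t + 1) (by omega) ht (or_iff_not_imp_left.2 fun hs => ?_)
  exact (R.card_le t).lt_of_ne fun hc => h ⟨by omega, ht, hs, hc⟩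

lemma C_succ_of_evictStep (h : EvictStep R (t + 1)) :
    R.C (t + 1) = insert (σ (t + 1)) ((R.C t).erase (R.p (t + 1))) :=
  R.evict (t + 1) h.1 h.2.1 h.2.2.1 h.2.2.2

lemma p_mem_of_evictStep (h : EvictStep R t) : R.p t ∈ R.C (t - 1) :=
  R.evict_mem t h.1 h.2.1 h.2.2.1 h.2.2.2

lemma card_erase_p_add_one (h : EvictStep R (t + 1)) :
    #((R.C t).erase (R.p (t + 1))) + 1 = k :=
  (card_erase_add_one (p_mem_of_evictStep h)).trans h.2.2.2

lemma mem_C_of_not_evictStep (ht : t < T) (hc : #(R.C t) = k) (h : ¬ EvictStep R (t + 1)) :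
    σ (t + 1) ∈ R.C t :=
  by_contra fun hs => h ⟨by omega, ht, hs, hc⟩

lemma C_succ_erase_of_not_evictStep (ht : t < T) (h : ¬ EvictStep R (t + 1)) :
    (R.C (t + 1)).erase (σ (t + 1)) = (R.C t).erase (σ (t + 1)) := by
  rw [C_succ_of_not_evictStep ht h, erase_insert_eq_erase]

lemma C_succ_erase_of_evictStep (h : EvictStep R (t + 1)) :
    (R.C (t + 1)).erase (σ (t + 1)) = (R.C t).erase (R.p (t + 1)) := by
  have hs : σ (t + 1) ∉ (R.C t).erase (R.p (t + 1)) := fun hs => h.2.2.1 (mem_of_mem_erase hs)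
  rw [C_succ_of_evictStep h, erase_insert hs]

lemma C_succ_subset (ht : t < T) : R.C (t + 1) ⊆ insert (σ (t + 1)) (R.C t) := by
  by_cases h : EvictStep R (t + 1)
  · rw [C_succ_of_evictStep h]
    exact insert_subset_insert _ (erase_subset _ _)
  · rw [C_succ_of_not_evictStep ht h]

lemma apply_mem_C (ht : t ∈ Icc 1 T) : σ t ∈ R.C t := by
  obtain ⟨h1, hT⟩ := mem_Icc.1 ht
  obtain ⟨t, rfl⟩ := Nat.exists_eq_add_of_le' h1
  by_cases h : EvictStep R (t + 1)
  · exact C_succ_of_evictStep h ▸ mem_insert_self _ _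
  · exact C_succ_of_not_evictStep hT h ▸ mem_insert_self _ _

lemma requested_of_mem_C (ht : t ≤ T) (hs : s ∈ R.C t) : ∃ i ∈ Icc 1 t, σ i = s := by
  induction t with
  | zero => simp [R.init] at hs
  | succ t ih =>
    rcases mem_insert.1 (C_succ_subset ht hs) with rfl | hs
    · exact ⟨t + 1, by simp, rfl⟩
    · obtain ⟨i, hi, his⟩ := ih (by omega) hs
      exact ⟨i, Icc_subset_Icc_right t.le_succ hi, his⟩

lemma lastReq_injOn (ht : t ≤ T) : Set.InjOn (lastReq σ t) (R.C t) :=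
  Set.LeftInvOn.injOn (f₁' := σ) fun _ hs => apply_lastReq (requested_of_mem_C ht hs)

lemma card_filter_lastReq_le (ht : t ≤ T) (Q : ℕ → Prop) [DecidablePred Q] :
    #{s ∈ R.C t | Q (lastReq σ t s)} ≤ #{i ∈ Icc 1 T | t < nextReq σ T i ∧ Q i} := by
  refine card_le_card_of_injOn (lastReq σ t) (fun s hs => ?_)
    ((lastReq_injOn ht).mono fun s hs => (mem_filter.1 hs).1)
  obtain ⟨hsC, hQ⟩ := mem_filter.1 (mem_coe.1 hs)
  have hreq := requested_of_mem_C ht hsC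
  exact mem_coe.2 (mem_filter.2 ⟨Icc_subset_Icc_right ht (lastReq_mem_Icc hreq),
    lt_nextReq_lastReq hreq ht, hQ⟩)

lemma card_C_succ_of_card_C_eq (ht : t < T) (hc : #(R.C t) = k) : #(R.C (t + 1)) = k := by
  by_cases h : EvictStep R (t + 1)
  · refine Eq.trans ?_ (card_erase_p_add_one h)
    rw [← C_succ_erase_of_evictStep h, card_erase_add_one (apply_mem_C (by simp; omega))]
  · rw [C_succ_of_not_evictStep ht h, insert_eq_of_mem (mem_C_of_not_evictStep ht hc h), hc]

lemma C_eq_or_card_eq (A B : CacheRun S k T σ) (ht : t ≤ T) :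
    A.C t = B.C t ∨ #(A.C t) = k ∧ #(B.C t) = k := by
  induction t with
  | zero => exact Or.inl (A.init.trans B.init.symm)
  | succ t ih =>
    have hfull : #(A.C t) = k ∧ #(B.C t) = k → #(A.C (t + 1)) = k ∧ #(B.C (t + 1)) = k :=
      And.imp (card_C_succ_of_card_C_eq ht) (card_C_succ_of_card_C_eq ht)
    rcases ih (by omega) with heq | hc
    · rcases (A.card_le t).eq_or_lt with hc | hc
      · exact Or.inr (hfull ⟨hc, heq ▸ hc⟩)
      · have hA : ¬ EvictStep A (t + 1) := fun h => hc.ne h.2.2.2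
        have hB : ¬ EvictStep B (t + 1) := fun h => hc.ne (heq ▸ h.2.2.2)
        left
        rw [C_succ_of_not_evictStep ht hA, C_succ_of_not_evictStep ht hB, heq]
    · exact Or.inr (hfull hc)

lemma card_C_eq_of_evictStep (A : CacheRun S k T σ) (h : EvictStep B (t + 1)) : #(A.C t) = k :=
  (C_eq_or_card_eq A B (Nat.le_of_succ_le h.2.1)).elim (fun heq => heq ▸ h.2.2.2) And.left

end CacheRun

open CacheRun

lemma IsBlindOracle.lastReq_le (hB : IsBlindOracle B ω) (h : EvictStep B t) (hs : s ∈ B.C (t - 1)) :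
    ω (lastReq σ (t - 1) s) ≤ ω (lastReq σ (t - 1) (B.p t)) := by
  have ht : t - 1 ≤ T := (Nat.sub_le t 1).trans h.2.1
  have hmem {s : S} (hs : s ∈ B.C (t - 1)) : lastReq σ (t - 1) s ∈ lastIdx B (t - 1) := by
    have happ := apply_lastReq (requested_of_mem_C ht hs)
    simp only [lastIdx, mem_filter, happ]
    exact ⟨lastReq_mem_Icc (requested_of_mem_C ht hs), hs, fun j hj =>
      apply_ne_of_lastReq_lt (mem_Icc.1 hj).1 (mem_Icc.1 hj).2⟩
  have hp := p_mem_of_evictStep h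
  exact hB t h _ (hmem hp) (apply_lastReq (requested_of_mem_C ht hp)).symm _ (hmem hs)

/-- The number of cache misses of `R` up to time `t`. -/
noncomputable def missesUpTo (R : CacheRun S k T σ) (t : ℕ) : ℕ :=
  #{i ∈ Icc 1 t | σ i ∉ R.C (i - 1)}

lemma missesUpTo_succ (R : CacheRun S k T σ) (t : ℕ) :
    missesUpTo R (t + 1) = missesUpTo R t + if σ (t + 1) ∈ R.C t then 0 else 1 := by
  rw [missesUpTo, ← insert_Icc_right_eq_Icc_add_one (by omega), filter_insert, Nat.add_sub_cancel,
    missesUpTo]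
  split_ifs with h
  · rfl
  · rw [card_insert_of_notMem (by simp)]

lemma card_C_le_missesUpTo (ht : t ≤ T) : #(R.C t) ≤ missesUpTo R t := by
  induction t with
  | zero => simp [R.init]
  | succ t ih =>
    have hC := card_le_card (C_succ_subset (R := R) ht)
    have := ih (by omega)
    rw [card_insert_eq_ite] at hC
    rw [missesUpTo_succ]
    split_ifs at hC ⊢ <;> omega

lemma missesUpTo_le_misses (ht : t ≤ T) : missesUpTo R t ≤ misses R :=
  card_le_card (filter_subset_filter _ (Icc_subset_Icc_right ht))

lemma card_anchored_le_wrongAt {F : Finset S} {ℓ : S → ℕ} {p : ℕ} (ht : t ≤ T)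
    (h : CreditScheme ω (lastReq σ t) (expired σ T t) (A.C t) (B.C t) F ℓ p) :
    #((A.C t \ B.C t) \ F) ≤ wrongAt σ T ω t := by
  refine (h.card_anchored_le t).trans (add_le_add ?_ (card_filter_lastReq_le ht fun i => ω i ≤ t))
  rw [expired, filter_filter]

variable {F : Finset S} {ℓ : S → ℕ} {p : ℕ}

lemma expired_subset_expired_succ : expired σ T t ⊆ expired σ T (t + 1) :=
  monotone_filter_right _ fun _ _ hi => hi.trans t.le_succ

lemma lt_of_mem_expired {i : ℕ} (ht : t ≤ T) (hi : i ∈ expired σ T t) : i < t :=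
  have hit := (mem_filter.1 hi).2
  (lt_nextReq_and_apply_nextReq (hit.trans ht)).1.trans_le hit

lemma lastReq_mem_expired_succ (ht : t < T) (hs : ∃ i ∈ Icc 1 t, σ i = σ (t + 1)) :
    lastReq σ t (σ (t + 1)) ∈ expired σ T (t + 1) :=
  mem_filter.2 ⟨Icc_subset_Icc_right ht.le (lastReq_mem_Icc hs), (nextReq_lastReq hs ht).le⟩

lemma exists_scheme_erase (hB : IsBlindOracle B ω) (ht : t < T) (hs : σ (t + 1) = s)
    (h : CreditScheme ω (lastReq σ t) (expired σ T (t + 1)) (A.C t) (B.C t) F ℓ p) :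
    ∃ F' ℓ' p', CreditScheme ω (lastReq σ t) (expired σ T (t + 1)) ((A.C (t + 1)).erase s)
        ((B.C (t + 1)).erase s) F' ℓ' p' ∧
      (∀ a ∈ ((A.C (t + 1)).erase s \ (B.C (t + 1)).erase s) \ F',
        a ∈ (A.C t \ B.C t) \ F ∨ EvictStep B (t + 1) ∧ B.p (t + 1) = a) ∧
      #F' + p' + (if s ∈ B.C t then 0 else 1) ≤
        #F + p + 2 * (if s ∈ A.C t then 0 else 1) + if s ∈ (A.C t \ B.C t) \ F then 1 else 0 := by
  subst hs
  have hmax (hEB : EvictStep B (t + 1)) (b : S) (hb : b ∈ B.C t) :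
      ω (lastReq σ t b) ≤ ω (lastReq σ t (B.p (t + 1))) := hB.lastReq_le hEB hb
  by_cases hEA : EvictStep A (t + 1) <;> by_cases hEB : EvictStep B (t + 1)
  · have hsA : σ (t + 1) ∉ A.C t := hEA.2.2.1
    have hsB : σ (t + 1) ∉ B.C t := hEB.2.2.1
    have hcard := (card_erase_p_add_one hEA).trans (card_erase_p_add_one hEB).symm
    obtain ⟨F', h', hD, hF'⟩ := h.exists_evict_evict (hmax hEB) (Nat.add_right_cancel hcard).le
    rw [C_succ_erase_of_evictStep hEA, C_succ_erase_of_evictStep hEB, if_neg hsA, if_neg hsB]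
    exact ⟨F', ℓ, p, h', fun a ha => Or.inl (hD ha), by omega⟩
  · have hsA : σ (t + 1) ∉ A.C t := hEA.2.2.1
    have hsB := mem_C_of_not_evictStep ht (card_C_eq_of_evictStep B hEA) hEB
    obtain ⟨F', p', h', hD, hcost⟩ := h.exists_evict_hit hsA (A.p (t + 1))
    rw [C_succ_erase_of_evictStep hEA, C_succ_erase_of_not_evictStep ht hEB, if_neg hsA, if_pos hsB]
    exact ⟨F', ℓ, p', h', fun a ha => Or.inl (hD ha), by omega⟩
  · have hsB : σ (t + 1) ∉ B.C t := hEB.2.2.1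
    have hcA := card_C_eq_of_evictStep A hEB
    have hsA := mem_C_of_not_evictStep ht hcA hEA
    have hsP : ℓ (σ (t + 1)) ∈ expired σ T (t + 1) := (h.label_or _ hsA).elim
      (fun hlast => hlast ▸ lastReq_mem_expired_succ ht (requested_of_mem_C ht.le hsA)) id
    have hcard := (card_erase_add_one hsA).trans (hcA.trans (card_erase_p_add_one hEB).symm)
    obtain ⟨F', ℓ', p', h', hD, hcost⟩ :=
      h.exists_hit_evict hsA hsB hsP (hmax hEB) (Nat.add_right_cancel hcard).le
    rw [C_succ_erase_of_not_evictStep ht hEA, C_succ_erase_of_evictStep hEB, if_pos hsA, if_neg hsB]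
    refine ⟨F', ℓ', p', h', fun a ha => ?_, by omega⟩
    exact (mem_insert.1 (hD ha)).symm.imp mem_of_mem_erase fun haq => ⟨hEB, haq.symm⟩
  · have hsAB : σ (t + 1) ∈ A.C t ↔ σ (t + 1) ∈ B.C t := by
      rcases C_eq_or_card_eq A B ht.le with heq | ⟨hcA, hcB⟩
      · rw [heq]
      · exact iff_of_true (mem_C_of_not_evictStep ht hcA hEA) (mem_C_of_not_evictStep ht hcB hEB)
    rw [C_succ_erase_of_not_evictStep ht hEA, C_succ_erase_of_not_evictStep ht hEB]
    exact ⟨F, ℓ, p, h.erase_erase hsAB, fun a ha => Or.inl (by grind), by grind⟩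

lemma exists_scheme_succ (hB : IsBlindOracle B ω) (ht : t < T)
    (h : CreditScheme ω (lastReq σ t) (expired σ T t) (A.C t) (B.C t) F ℓ p) :
    ∃ F' ℓ' p', CreditScheme ω (lastReq σ (t + 1)) (expired σ T (t + 1)) (A.C (t + 1))
        (B.C (t + 1)) F' ℓ' p' ∧
      (∀ a ∈ (A.C (t + 1) \ B.C (t + 1)) \ F', a ∈ ((A.C t \ B.C t) \ F).erase (σ (t + 1)) ∨
        EvictStep B (t + 1) ∧ B.p (t + 1) = a) ∧
      #F' + p' + (if σ (t + 1) ∈ B.C t then 0 else 1) ≤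
        #F + p + 2 * (if σ (t + 1) ∈ A.C t then 0 else 1) +
          if σ (t + 1) ∈ (A.C t \ B.C t) \ F then 1 else 0 := by
  obtain ⟨F', ℓ', p', h', hD, hcost⟩ :=
    exists_scheme_erase hB ht rfl (h.mono expired_subset_expired_succ)
  have hsA : σ (t + 1) ∈ A.C (t + 1) := apply_mem_C (by simp; omega)
  have hsB : σ (t + 1) ∈ B.C (t + 1) := apply_mem_C (by simp; omega)
  have hfresh : ∀ a ∈ (A.C (t + 1)).erase (σ (t + 1)), ℓ' a ≠ t + 1 := fun a ha => by
    rcases h'.label_or a ha with hlast | hexp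
    · exact hlast ▸ ((lastReq_le σ t a).trans_lt t.lt_succ_self).ne
    · exact (lt_of_mem_expired ht hexp).ne
  have hins := h'.insert_insert (notMem_erase _ _) (notMem_erase _ _) hfresh
  rw [insert_erase hsA, insert_erase hsB, ← lastReq_succ] at hins
  refine ⟨F', _, p', hins, fun a ha => ?_, hcost⟩
  have := hD a
  grind

/-- The last time up to `t` at which the page `s` was evicted by `R` (`0` if there is none). -/
noncomputable def lastEvict (R : CacheRun S k T σ) (t : ℕ) (s : S) : ℕ :=
  Nat.findGreatest (fun e => EvictStep R e ∧ R.p e = s) t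

lemma lastEvict_le (R : CacheRun S k T σ) (t : ℕ) (s : S) : lastEvict R t s ≤ t :=
  Nat.findGreatest_le t

lemma lastEvict_le_succ (R : CacheRun S k T σ) (t : ℕ) (s : S) :
    lastEvict R t s ≤ lastEvict R (t + 1) s :=
  Nat.findGreatest_mono_right _ t.le_succ

lemma lastEvict_p (h : EvictStep R t) : lastEvict R t (R.p t) = t :=
  Nat.findGreatest_eq (P := fun e => EvictStep R e ∧ R.p e = R.p t) ⟨h, rfl⟩

lemma mem_C_of_lastEvict_le (hmt : m ≤ t) (ht : t ≤ T) (hs : s ∈ R.C m)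
    (hle : lastEvict R t s ≤ m) : s ∈ R.C t := by
  induction t, hmt using Nat.le_induction with
  | base => exact hs
  | succ t hmt ih =>
    have hst : s ∈ R.C t := ih (by omega) ((lastEvict_le_succ R t s).trans hle)
    by_cases h : EvictStep R (t + 1)
    · have hsp : s ≠ R.p (t + 1) := by
        rintro rfl
        have := lastEvict_p h
        omega
      rw [C_succ_of_evictStep h]
      exact mem_insert_of_mem (mem_erase.2 ⟨hsp, hst⟩)
    · rw [C_succ_of_not_evictStep ht h]
      exact mem_insert_of_mem hst

lemma lastEvict_spec (ht : t ≤ T) (hreq : ∃ i ∈ Icc 1 t, σ i = s) (hs : s ∉ R.C t) :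
    EvictStep R (lastEvict R t s) ∧ R.p (lastEvict R t s) = s ∧
      ∀ j ∈ Icc (lastEvict R t s) t, σ j ≠ s := by
  have hlt : ∀ j ∈ Icc 1 t, σ j = s → j < lastEvict R t s := by
    intro j hj hjs
    by_contra! hle
    exact hs (mem_C_of_lastEvict_le (mem_Icc.1 hj).2 ht
      (hjs ▸ apply_mem_C (Icc_subset_Icc_right ht hj)) hle)
  obtain ⟨i, hi, his⟩ := hreq
  obtain ⟨hE, hp⟩ : EvictStep R (lastEvict R t s) ∧ R.p (lastEvict R t s) = s :=
    Nat.findGreatest_of_ne_zero (P := fun e => EvictStep R e ∧ R.p e = s) rfl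
      (Nat.zero_lt_of_lt (hlt i hi his)).ne'
  refine ⟨hE, hp, fun j hj hjs => ?_⟩
  rw [mem_Icc] at hj
  exact hj.1.not_gt (hlt j (mem_Icc.2 ⟨hE.1.trans hj.1, hj.2⟩) hjs)

/-- At time `m` the run `R` misses a page that was requested, hence also evicted, before. -/
def CapacityMiss (R : CacheRun S k T σ) (m : ℕ) : Prop :=
  m ∈ Icc 1 T ∧ ¬ NewPage σ m ∧ σ m ∉ R.C (m - 1)

/-- The invariant of the comparison of `B` with `A` after `t` requests: the misses of `B` are paid
for by two credits per miss of `A` and by the capacity misses in `J`, and the time that the pages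
missed in `J` and the pages of the anchored holes have spent outside the cache of `B` is at most
the prediction loss accumulated so far. -/
structure Charging (ω : ℕ → ℕ) (A B : CacheRun S k T σ) (t : ℕ) (J : Finset ℕ) (F : Finset S)
    (ℓ : S → ℕ) (p : ℕ) : Prop where
  scheme : CreditScheme ω (lastReq σ t) (expired σ T t) (A.C t) (B.C t) F ℓ p
  capacityMiss : ∀ m ∈ J, m ≤ t ∧ CapacityMiss B m
  misses_le : missesUpTo B t + #F + p ≤ 2 * missesUpTo A t + #J
  absence_le : ∑ m ∈ J, (m - lastEvict B (m - 1) (σ m)) +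
    ∑ s ∈ (A.C t \ B.C t) \ F, (t + 1 - lastEvict B t s) ≤ ∑ τ ∈ Icc 1 t, wrongAt σ T ω τ

lemma charging_zero (ω : ℕ → ℕ) (A B : CacheRun S k T σ) (ℓ : S → ℕ) :
    Charging ω A B 0 ∅ ∅ ℓ 0 where
  scheme := by
    rw [A.init, B.init]
    constructor <;> simp [ThresholdDom]
  capacityMiss := by simp
  misses_le := by simp [missesUpTo]
  absence_le := by simp [A.init]

lemma sum_absence_succ_le {D D' : Finset S}
    (hD : ∀ a ∈ D', a ∈ D ∨ EvictStep B (t + 1) ∧ B.p (t + 1) = a) :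
    ∑ s ∈ D', (t + 1 + 1 - lastEvict B (t + 1) s) ≤ #D' + ∑ s ∈ D, (t + 1 - lastEvict B t s) := by
  have hterm : ∀ s ∈ D', t + 1 + 1 - lastEvict B (t + 1) s ≤
      1 + if s ∈ D then t + 1 - lastEvict B t s else 0 := by
    intro s hs
    by_cases hsD : s ∈ D
    · have := lastEvict_le_succ B t s
      rw [if_pos hsD]
      omega
    · obtain ⟨hE, rfl⟩ := (hD s hs).resolve_left hsD
      have := lastEvict_p hE
      omega
  calc ∑ s ∈ D', (t + 1 + 1 - lastEvict B (t + 1) s)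
      ≤ ∑ s ∈ D', (1 + if s ∈ D then t + 1 - lastEvict B t s else 0) := sum_le_sum hterm
    _ = #D' + ∑ s ∈ D' ∩ D, (t + 1 - lastEvict B t s) := by
        rw [sum_add_distrib, sum_ite_mem, card_eq_sum_ones]
    _ ≤ #D' + ∑ s ∈ D, (t + 1 - lastEvict B t s) := by
        gcongr
        exact inter_subset_right

lemma Charging.exists_succ {J : Finset ℕ} (hB : IsBlindOracle B ω) (ht : t < T)
    (h : Charging ω A B t J F ℓ p) : ∃ J' F' ℓ' p', Charging ω A B (t + 1) J' F' ℓ' p' := by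
  obtain ⟨F', ℓ', p', hscheme, hD, hcost⟩ := exists_scheme_succ hB ht h.scheme
  have hmissesA := missesUpTo_succ A t
  have hmissesB := missesUpTo_succ B t
  have hmisses := h.misses_le
  have habsence := h.absence_le
  have hsum := sum_absence_succ_le hD
  have hwrong : #((A.C (t + 1) \ B.C (t + 1)) \ F') ≤ wrongAt σ T ω (t + 1) :=
    card_anchored_le_wrongAt ht hscheme
  have hsucc : ∑ τ ∈ Icc 1 (t + 1), wrongAt σ T ω τ =
      ∑ τ ∈ Icc 1 t, wrongAt σ T ω τ + wrongAt σ T ω (t + 1) := sum_Icc_succ_top (by omega) _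
  have hold : ∀ m ∈ J, m ≤ t + 1 ∧ CapacityMiss B m := fun m hm =>
    ⟨(h.capacityMiss m hm).1.trans t.le_succ, (h.capacityMiss m hm).2⟩
  by_cases hs : σ (t + 1) ∈ (A.C t \ B.C t) \ F
  · have hsAB := mem_sdiff.1 (mem_sdiff.1 hs).1
    have hmiss : CapacityMiss B (t + 1) := by
      obtain ⟨i, hi, his⟩ := requested_of_mem_C ht.le hsAB.1
      rw [mem_Icc] at hi
      exact ⟨mem_Icc.2 ⟨by omega, ht⟩, fun hnew => hnew i hi.1 (by omega) his, hsAB.2⟩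
    have hJ : t + 1 ∉ J := fun hmem => (h.capacityMiss _ hmem).1.not_gt t.lt_succ_self
    have herase := add_sum_erase _ (fun s => t + 1 - lastEvict B t s) hs
    refine ⟨insert (t + 1) J, F', ℓ', p', hscheme, ?_, ?_, ?_⟩
    · exact forall_mem_insert _ _ _ |>.2 ⟨⟨le_rfl, hmiss⟩, hold⟩
    · rw [card_insert_of_notMem hJ]
      rw [if_pos hs] at hcost
      omega
    · rw [sum_insert hJ, hsucc, Nat.add_sub_cancel]
      omega
  · rw [if_neg hs] at hcost
    rw [erase_eq_of_notMem hs] at hsum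
    exact ⟨J, F', ℓ', p', hscheme, hold, by omega, by omega⟩

lemma exists_charging (hB : IsBlindOracle B ω) (A : CacheRun S k T σ) (ht : t ≤ T) :
    ∃ J F ℓ p, Charging ω A B t J F ℓ p := by
  induction t with
  | zero => exact ⟨∅, ∅, fun _ => 0, 0, charging_zero ω A B _⟩
  | succ t ih =>
    obtain ⟨J, F, ℓ, p, h⟩ := ih (by omega)
    exact h.exists_succ hB ht

lemma exists_charged_misses (hB : IsBlindOracle B ω) (A : CacheRun S k T σ) :
    ∃ J : Finset ℕ, (∀ m ∈ J, CapacityMiss B m) ∧ misses B ≤ 2 * misses A + #J ∧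
      ∑ m ∈ J, (m - lastEvict B (m - 1) (σ m)) ≤ totalLoss σ T ω := by
  obtain ⟨J, F, ℓ, p, h⟩ := exists_charging hB A le_rfl
  have hmisses : missesUpTo B T + #F + p ≤ 2 * missesUpTo A T + #J := h.misses_le
  have hloss := sum_wrongAt_le_totalLoss σ T ω
  have habsence := h.absence_le
  refine ⟨J, fun m hm => (h.capacityMiss m hm).2, ?_, by omega⟩
  change missesUpTo B T ≤ 2 * missesUpTo A T + #J
  omega

lemma card_filter_nextReq_le {n : ℕ} (hnT : n ≤ T) (ht : t < T) (hs : σ (t + 1) ∉ R.C t) :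
    #{s ∈ R.C t | nextReq σ T (lastReq σ t s) ≤ n} ≤ n - (t + 1) := by
  have hnext {s : S} (hs : s ∈ ({s ∈ R.C t | nextReq σ T (lastReq σ t s) ≤ n} : Finset S)) :
      nextReq σ T (lastReq σ t s) ≤ n ∧ t < nextReq σ T (lastReq σ t s) ∧ s ∈ R.C t ∧
        σ (nextReq σ T (lastReq σ t s)) = s := by
    obtain ⟨hsC, hn⟩ := mem_filter.1 hs
    have hreq := requested_of_mem_C ht.le hsC
    exact ⟨hn, lt_nextReq_lastReq hreq ht.le, hsC,
      (lt_nextReq_and_apply_nextReq (hn.trans hnT)).2.trans (apply_lastReq hreq)⟩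
  rw [← Nat.card_Ioc]
  refine card_le_card_of_injOn (fun s => nextReq σ T (lastReq σ t s)) (fun s hs' => ?_)
    (Set.LeftInvOn.injOn (f₁' := σ) fun s hs' => (hnext hs').2.2.2)
  obtain ⟨hn, hlt, hsC, happ⟩ := hnext hs'
  have hne : t + 1 ≠ nextReq σ T (lastReq σ t s) := fun heq => hs (heq ▸ happ.symm ▸ hsC)
  exact mem_coe.2 (mem_Ioc.2 ⟨Nat.lt_of_le_of_ne hlt hne, hn⟩)

lemma IsBlindOracle.le_card_later_predicted_earlier (hB : IsBlindOracle B ω)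
    (h : EvictStep B (t + 1)) (hk : t + 1 + k ≤ T) (n : ℕ) :
    k ≤ n - (t + 1) +
      #{i ∈ Icc 1 T | n < nextReq σ T i ∧ ω i ≤ ω (lastReq σ t (B.p (t + 1)))} := by
  rcases lt_or_ge T n with hn | hn
  · omega
  have ht : t < T := h.2.1
  calc k = #{s ∈ B.C t | nextReq σ T (lastReq σ t s) ≤ n} +
        #{s ∈ B.C t | ¬ nextReq σ T (lastReq σ t s) ≤ n} := by
        rw [card_filter_add_card_filter_not]
        exact h.2.2.2.symm
    _ ≤ n - (t + 1) + #{s ∈ B.C t | n < nextReq σ T (lastReq σ t s) ∧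
          ω (lastReq σ t s) ≤ ω (lastReq σ t (B.p (t + 1)))} :=
        add_le_add (card_filter_nextReq_le hn ht h.2.2.1)
          (card_le_card fun s hs => mem_filter.2 ⟨(mem_filter.1 hs).1,
            not_le.1 (mem_filter.1 hs).2, hB.lastReq_le h (mem_filter.1 hs).1⟩)
    _ ≤ _ := by
        gcongr
        refine (card_filter_lastReq_le ht.le fun i => n < nextReq σ T i ∧
          ω i ≤ ω (lastReq σ t (B.p (t + 1)))).trans (card_le_card fun i hi => ?_)
        exact mem_filter.2 ⟨(mem_filter.1 hi).1, (mem_filter.1 hi).2.2⟩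

lemma CapacityMiss.exists_apply_eq (h : CapacityMiss R m) : ∃ i ∈ Icc 1 (m - 1), σ i = σ m := by
  obtain ⟨-, hold, -⟩ := h
  simp only [NewPage, not_forall, not_not] at hold
  obtain ⟨i, hi, him, heq⟩ := hold
  exact ⟨i, mem_Icc.2 ⟨hi, by omega⟩, heq⟩

lemma CapacityMiss.lastReq_mem_Icc (h : CapacityMiss R m) : lastReq σ (m - 1) (σ m) ∈ Icc 1 T :=
  Icc_subset_Icc_right ((Nat.sub_le m 1).trans (mem_Icc.1 h.1).2)
    (Caching.lastReq_mem_Icc h.exists_apply_eq)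

lemma CapacityMiss.nextReq_eq (h : CapacityMiss R m) :
    nextReq σ T (lastReq σ (m - 1) (σ m)) = m := by
  obtain ⟨h1, hT⟩ := mem_Icc.1 h.1
  have hreq := h.exists_apply_eq
  obtain ⟨t, rfl⟩ := Nat.exists_eq_add_of_le' h1
  exact nextReq_lastReq hreq hT

lemma CapacityMiss.lastEvict_spec (h : CapacityMiss R m) :
    EvictStep R (lastEvict R (m - 1) (σ m)) ∧ R.p (lastEvict R (m - 1) (σ m)) = σ m ∧
      lastReq σ (m - 1) (σ m) = lastReq σ (lastEvict R (m - 1) (σ m) - 1) (σ m) := by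
  have hle := lastEvict_le R (m - 1) (σ m)
  obtain ⟨hE, hp, hne⟩ := Caching.lastEvict_spec ((Nat.sub_le m 1).trans (mem_Icc.1 h.1).2)
    h.exists_apply_eq h.2.2
  refine ⟨hE, hp, lastReq_eq_of_forall_ne ((Nat.sub_le _ 1).trans hle) fun j hj => hne j ?_⟩
  rw [mem_Ioc] at hj
  exact mem_Icc.2 ⟨by omega, hj.2⟩

lemma CapacityMiss.le_absence_add_inversions (hB : IsBlindOracle B ω) (h : CapacityMiss B m)
    (hk : lastEvict B (m - 1) (σ m) + k ≤ T) :
    k ≤ (m - lastEvict B (m - 1) (σ m)) + 2 * (ω (lastReq σ (m - 1) (σ m)) - m) +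
      #{i ∈ Icc 1 T | m < nextReq σ T i ∧ 2 * ω i < m + nextReq σ T i} := by
  obtain ⟨hE, hp, hlast⟩ := h.lastEvict_spec
  obtain ⟨t, ht⟩ := Nat.exists_eq_add_of_le' hE.1
  rw [ht, Nat.add_sub_cancel] at hlast
  rw [ht] at hE hp hk ⊢
  rw [hlast]
  -- With `w` the prediction for the page missed at `m`, the threshold `m + 2 (w - m)` is the least
  -- beyond which `ω i ≤ w` forces `2 ω i < m + ν i`.
  have hcount := hB.le_card_later_predicted_earlier hE hk (m + 2 * (ω (lastReq σ t (σ m)) - m))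
  rw [hp] at hcount
  have hsub : #{i ∈ Icc 1 T | m + 2 * (ω (lastReq σ t (σ m)) - m) < nextReq σ T i ∧
      ω i ≤ ω (lastReq σ t (σ m))} ≤
      #{i ∈ Icc 1 T | m < nextReq σ T i ∧ 2 * ω i < m + nextReq σ T i} :=
    card_le_card (monotone_filter_right _ fun i _ hi => by omega)
  omega

lemma sum_card_inversions_le (σ : ℕ → S) (T : ℕ) (ω : ℕ → ℕ) (J : Finset ℕ) :
    ∑ m ∈ J, #{i ∈ Icc 1 T | m < nextReq σ T i ∧ 2 * ω i < m + nextReq σ T i} ≤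
      ∑ i ∈ Icc 1 T, 2 * (nextReq σ T i - ω i) := by
  rw [show ∑ m ∈ J, #{i ∈ Icc 1 T | m < nextReq σ T i ∧ 2 * ω i < m + nextReq σ T i} =
    ∑ i ∈ Icc 1 T, #{m ∈ J | m < nextReq σ T i ∧ 2 * ω i < m + nextReq σ T i} from
    sum_card_bipartiteAbove_eq_sum_card_bipartiteBelow _]
  refine sum_le_sum fun i _ => ?_
  calc #{m ∈ J | m < nextReq σ T i ∧ 2 * ω i < m + nextReq σ T i}
      ≤ #(Ico (2 * ω i + 1 - nextReq σ T i) (nextReq σ T i)) := card_le_card fun m hm => by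
        have := (mem_filter.1 hm).2
        exact mem_Ico.2 (by omega)
    _ ≤ 2 * (nextReq σ T i - ω i) := by
        rw [Nat.card_Ico]
        omega

lemma sum_late_predictions_le (ω : ℕ → ℕ) {J : Finset ℕ} (hJ : ∀ m ∈ J, CapacityMiss R m) :
    ∑ m ∈ J, (ω (lastReq σ (m - 1) (σ m)) - m) ≤ ∑ i ∈ Icc 1 T, (ω i - nextReq σ T i) := by
  have hinj : Set.InjOn (fun m => lastReq σ (m - 1) (σ m)) J :=
    Set.LeftInvOn.injOn (f₁' := nextReq σ T) fun m hm => (hJ m hm).nextReq_eq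
  calc ∑ m ∈ J, (ω (lastReq σ (m - 1) (σ m)) - m)
      = ∑ i ∈ J.image fun m => lastReq σ (m - 1) (σ m), (ω i - nextReq σ T i) := by
        rw [sum_image hinj]
        exact sum_congr rfl fun m hm => by rw [(hJ m hm).nextReq_eq]
    _ ≤ ∑ i ∈ Icc 1 T, (ω i - nextReq σ T i) := sum_le_sum_of_subset
        (image_subset_iff.2 fun m hm => (hJ m hm).lastReq_mem_Icc)

lemma mul_card_early_evictions_le (hB : IsBlindOracle B ω) {J : Finset ℕ}
    (hJ : ∀ m ∈ J, CapacityMiss B m) (hk : ∀ m ∈ J, lastEvict B (m - 1) (σ m) + k ≤ T) :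
    k * #J ≤ ∑ m ∈ J, (m - lastEvict B (m - 1) (σ m)) + 2 * totalLoss σ T ω := by
  have hlate := sum_late_predictions_le ω hJ
  have hinv := sum_card_inversions_le σ T ω J
  have hloss : totalLoss σ T ω =
      ∑ i ∈ Icc 1 T, (nextReq σ T i - ω i) + ∑ i ∈ Icc 1 T, (ω i - nextReq σ T i) :=
    sum_add_distrib
  have hsum := sum_le_sum fun m hm => (hJ m hm).le_absence_add_inversions hB (hk m hm)
  rw [sum_const, smul_eq_mul, mul_comm, sum_add_distrib, sum_add_distrib, ← mul_sum] at hsum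
  rw [← mul_sum] at hinv
  omega

lemma card_late_evictions_le_misses (A : CacheRun S k T σ) {J : Finset ℕ}
    (hJ : ∀ m ∈ J, CapacityMiss B m) (hk : ∀ m ∈ J, T < lastEvict B (m - 1) (σ m) + k) :
    #J ≤ misses A := by
  rcases J.eq_empty_or_nonempty with rfl | ⟨m, hm⟩
  · simp
  have hcard : #J ≤ k := by
    have hsub : J ⊆ Ioc (T - k) T := fun m hm => by
      have := lastEvict_le B (m - 1) (σ m)
      have := hk m hm
      have := mem_Icc.1 (hJ m hm).1
      exact mem_Ioc.2 (by omega)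
    have := card_le_card hsub
    rw [Nat.card_Ioc] at this
    omega
  obtain ⟨hE, -, -⟩ := (hJ m hm).lastEvict_spec
  obtain ⟨t, ht⟩ := Nat.exists_eq_add_of_le' hE.1
  rw [ht] at hE
  have htT : t ≤ T := Nat.le_of_succ_le hE.2.1
  calc #J ≤ k := hcard
    _ = #(A.C t) := (card_C_eq_of_evictStep A hE).symm
    _ ≤ missesUpTo A t := card_C_le_missesUpTo htT
    _ ≤ misses A := missesUpTo_le_misses htT

lemma IsBlindOracle.mul_misses_le (hB : IsBlindOracle B ω) (A : CacheRun S k T σ) :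
    k * misses B ≤ k * (3 * misses A) + 3 * totalLoss σ T ω := by
  obtain ⟨J, hJ, hmisses, habsence⟩ := exists_charged_misses hB A
  set early : Finset ℕ := {m ∈ J | lastEvict B (m - 1) (σ m) + k ≤ T}
  set late : Finset ℕ := {m ∈ J | ¬ lastEvict B (m - 1) (σ m) + k ≤ T}
  have hcard : #early + #late = #J := card_filter_add_card_filter_not _
  have hearly : k * #early ≤ 3 * totalLoss σ T ω := by
    have hsub : early ⊆ J := filter_subset _ _
    have := mul_card_early_evictions_le hB (fun m hm => hJ m (hsub hm))
      fun m hm => (mem_filter.1 hm).2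
    have := sum_le_sum_of_subset (f := fun m => m - lastEvict B (m - 1) (σ m)) hsub
    omega
  have hlate : #late ≤ misses A := card_late_evictions_le_misses A
    (fun m hm => hJ m (filter_subset _ _ hm)) fun m hm => not_le.1 (mem_filter.1 hm).2
  calc k * misses B ≤ k * (3 * misses A + #early) := Nat.mul_le_mul_left k (by omega)
    _ = k * (3 * misses A) + k * #early := mul_add _ _ _
    _ ≤ k * (3 * misses A) + 3 * totalLoss σ T ω := by gcongr

end Runs

theorem stmt7_general {k T : ℕ} (hk : 1 ≤ k) {σ : ℕ → S} {ω : ℕ → ℕ} {B : CacheRun S k T σ}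
    (hB : IsBlindOracle B ω) (A : CacheRun S k T σ) :
    (misses B : ℝ) ≤ 3 * misses A + 3 * totalLoss σ T ω / k ∧
    (0 < misses A →
      (misses B : ℝ) / misses A ≤ 3 + 3 / k * ((totalLoss σ T ω : ℝ) / misses A)) := by
  have hk : (0 : ℝ) < k := by exact_mod_cast hk
  have hmul : (k * misses B : ℝ) ≤ k * (3 * misses A) + 3 * totalLoss σ T ω := by
    exact_mod_cast hB.mul_misses_le A
  have hbound : (misses B : ℝ) ≤ 3 * misses A + 3 * totalLoss σ T ω / k := by
    rw [← mul_le_mul_iff_right₀ hk, mul_add, mul_div_cancel₀ _ hk.ne']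
    exact hmul
  refine ⟨hbound, fun hA => ?_⟩
  have hA : (0 : ℝ) < misses A := by exact_mod_cast hA
  rw [div_le_iff₀ hA]
  refine hbound.trans_eq ?_
  field_simp

/-- For BlindOracle, `OBJ_B ≤ 3·OPT + 3η/k`; in particular its
competitive ratio is at most `3 + (3/k)·(η/OPT)`. -/
theorem stmt7 {S : Type} [DecidableEq S] (k T : ℕ) (hk : 1 ≤ k) (σ : ℕ → S) (ω : ℕ → ℕ)
    (B A : CacheRun S k T σ) (hB : IsBlindOracle B ω) (hA : IsBelady A) :
    (misses B : ℝ) ≤ 3 * misses A + 3 * totalLoss σ T ω / k ∧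
    (0 < misses A →
      (misses B : ℝ) / misses A ≤ 3 + 3 / k * ((totalLoss σ T ω : ℝ) / misses A)) :=
  stmt7_general hk hB A

end Caching
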